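/- arXiv:2601.05024 — 3 statements merged into one kernel-verified Lean document; each statement's English description precedes it below -/
import Mathlib

section
/- For every integer n and every complex number s with 0 < |s−n| < 1, π/sin(πs) = (2·(−1)^n/(s−n)) · Σ_{k=0}^{∞} η(2k)·(s−n)^{2k}, where η(0) := 1/2 and η(2k) := Σ_{m=1}^{∞} (−1)^{m−1}/m^{2k} = (1−2^{1−2k})·ζ(2k) is the alternating Riemann zeta (Dirichlet eta) value for k ≥ 1; the series converges absolutely for |s−n|<1. -/
/-! The expansion comes from the cotangent series. Expanding each term of the Mittag-Leffler
series `π cot(πx) = 1/x + ∑_{m≥1} (1/(x-m) + 1/(x+m))` as a geometric series in `(x/m)²` and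
exchanging the two summations gives `∑_{k≥0} ζ(2k) x^{2k} = -(x/2) π cot(πx)` for `0 < |x| < 1`
(`hasSum_zeta_even`; the constant term is right since `ζ(0) = -1/2`). Writing
`1/sin(πx) = cot(πx/2) - cot(πx)` and subtracting the series at `x/2` (doubled) from the series at
`x` produces the factors `1 - 2·4^{-k} = 1 - 2^{1-2k}`, that is, the eta values. The case of a
general integer `n` follows from `sin(π(x+n)) = (-1)^n sin(πx)`. -/

open scoped BigOperators

/-- Dirichlet eta value `η(k) = (1 − 2^{1−k})·ζ(k)`; with Mathlib's `riemannZeta 0 = −1/2`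
this gives the convention `η(0) = 1/2`. -/
noncomputable def dirEta (k : ℕ) : ℂ := (1 - (2 : ℂ) ^ (1 - (k : ℤ))) * riemannZeta (k : ℂ)

lemma hasSum_of_eq {f g : ℕ → ℂ} {a b : ℂ} (h : HasSum f a) (hf : ∀ k, g k = f k)
    (hab : b = a) : HasSum g b := by
  rw [hab, funext hf]
  exact h

lemma mem_integerComplement_of_norm_lt_one {x : ℂ} (h0 : x ≠ 0) (h1 : ‖x‖ < 1) :
    x ∈ Complex.integerComplement := by
  rintro ⟨m, rfl⟩
  rw [Complex.norm_intCast] at h1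
  have h2 : |m| < 1 := by exact_mod_cast h1
  exact h0 (by simp [Int.abs_lt_one_iff.mp h2])

/-- This double family sums, in one order, to the even zeta series without its constant term and,
in the other, to `-x/2` times the Mittag-Leffler series of `π cot(πx) - 1/x`. Its summability
justifies exchanging the two orders. -/
lemma summable_double {x : ℂ} (h1 : ‖x‖ < 1) :
    Summable (fun p : ℕ × ℕ => ((x / ((p.2 : ℂ) + 1)) ^ 2) ^ (p.1 + 1)) := by
  have hg : Summable (fun k : ℕ => (‖x‖ ^ 2) ^ (k + 1)) :=
    (summable_nat_add_iff 1).mpr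
      (summable_geometric_of_lt_one (by positivity) (by nlinarith [norm_nonneg x]))
  have hz : Summable (fun m : ℕ => (1 / ((m : ℝ) + 1) ^ 2)) := by
    have := (summable_nat_add_iff 1).mpr (Real.summable_one_div_nat_pow.mpr one_lt_two)
    simpa using this
  refine Summable.of_norm_bounded
    (hg.mul_of_nonneg hz (fun _ => by positivity) (fun _ => by positivity)) ?_
  rintro ⟨k, m⟩
  have hm : ‖(m : ℂ) + 1‖ = (m : ℝ) + 1 := by
    have := Complex.norm_natCast (m + 1)
    push_cast at this
    exact this
  simp only [norm_pow, norm_div, hm, div_pow]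
  rw [div_eq_mul_one_div, ← one_div_pow]
  refine mul_le_mul_of_nonneg_left ?_ (by positivity)
  refine pow_le_of_le_one (by positivity) ?_ (by omega)
  rw [div_le_one (by positivity)]
  exact one_le_pow₀ (by linarith [(Nat.cast_nonneg m : (0 : ℝ) ≤ m)])

/-- The cotangent generating function of the even zeta values. -/
lemma hasSum_zeta_even {x : ℂ} (h0 : x ≠ 0) (h1 : ‖x‖ < 1) :
    HasSum (fun k : ℕ => riemannZeta ((2 * k : ℕ) : ℂ) * x ^ (2 * k))
      (-(x / 2) * (Real.pi * Complex.cot (Real.pi * x))) := by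
  have hx := mem_integerComplement_of_norm_lt_one h0 h1
  have hs := summable_double h1
  have hk : ∀ k : ℕ, HasSum (fun m : ℕ => ((x / ((m : ℂ) + 1)) ^ 2) ^ (k + 1))
      (riemannZeta ((2 * (k + 1) : ℕ) : ℂ) * x ^ (2 * (k + 1))) := by
    intro k
    have e : riemannZeta ((2 * (k + 1) : ℕ) : ℂ) * x ^ (2 * (k + 1)) =
        ∑' m : ℕ, ((x / ((m : ℂ) + 1)) ^ 2) ^ (k + 1) := by
      rw [zeta_eq_tsum_one_div_nat_add_one_cpow
        (by rw [Complex.natCast_re]; exact_mod_cast (by omega : 1 < 2 * (k + 1))),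
        ← tsum_mul_right]
      refine tsum_congr fun m => ?_
      rw [Complex.cpow_natCast, ← pow_mul, div_pow]
      ring
    rw [e]
    exact (hs.prod_factor k).hasSum
  have hm : ∀ m : ℕ, HasSum (fun k : ℕ => ((x / ((m : ℂ) + 1)) ^ 2) ^ (k + 1))
      (-(x / 2) * (1 / (x - (m + 1)) + 1 / (x + (m + 1)))) := by
    intro m
    have hp : (m : ℂ) + 1 ≠ 0 := by exact_mod_cast Nat.succ_ne_zero m
    have ha : x + ((m : ℂ) + 1) ≠ 0 := by
      simpa using Complex.integerComplement_add_ne_zero hx ((m : ℤ) + 1)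
    have hb : x - ((m : ℂ) + 1) ≠ 0 := by
      simpa [sub_eq_add_neg] using Complex.integerComplement_add_ne_zero hx (-(m + 1) : ℤ)
    have hn : ‖(x / ((m : ℂ) + 1)) ^ 2‖ < 1 := by
      have hm' : ‖(m : ℂ) + 1‖ = (m : ℝ) + 1 := by
        have := Complex.norm_natCast (m + 1)
        push_cast at this
        exact this
      rw [norm_pow, norm_div, hm']
      refine pow_lt_one₀ (by positivity) ?_ two_ne_zero
      rw [div_lt_one (by positivity)]
      linarith [(Nat.cast_nonneg m : (0 : ℝ) ≤ m)]
    have h := (hasSum_geometric_of_norm_lt_one hn).mul_left ((x / ((m : ℂ) + 1)) ^ 2)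
    simp_rw [← pow_succ'] at h
    refine hasSum_of_eq h (fun _ => rfl) ?_
    have hc : 1 - (x / ((m : ℂ) + 1)) ^ 2 =
        -((x + ((m : ℂ) + 1)) * (x - ((m : ℂ) + 1))) / ((m : ℂ) + 1) ^ 2 := by
      field_simp
      ring
    rw [hc]
    field_simp
    ring
  have hA := hs.hasSum.prod_fiberwise hk
  have hB := ((Equiv.prodComm ℕ ℕ).hasSum_iff.mpr hs.hasSum).prod_fiberwise hm
  have hS : (∑' p : ℕ × ℕ, ((x / ((p.2 : ℂ) + 1)) ^ 2) ^ (p.1 + 1)) =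
      -(x / 2) * (Real.pi * Complex.cot (Real.pi * x) - 1 / x) := by
    rw [cot_series_rep' hx, ← tsum_mul_left]
    exact hB.tsum_eq.symm
  rw [hS] at hA
  have := (hasSum_nat_add_iff
    (f := fun k : ℕ => riemannZeta ((2 * k : ℕ) : ℂ) * x ^ (2 * k)) 1).mp hA
  refine hasSum_of_eq this (fun _ => rfl) ?_
  simp [riemannZeta_zero]
  field_simp
  ring

/-- The expansion at `n = 0`. -/
lemma hasSum_dirEta {x : ℂ} (h0 : x ≠ 0) (h1 : ‖x‖ < 1) :
    HasSum (fun k : ℕ => dirEta (2 * k) * x ^ (2 * k))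
      (x / 2 * (Real.pi / Complex.sin (Real.pi * x))) := by
  have h2 : ‖x / 2‖ < 1 := by
    rw [norm_div, Complex.norm_ofNat]
    linarith [norm_nonneg x]
  have hx0 : x / 2 ≠ 0 := div_ne_zero h0 two_ne_zero
  have h := (hasSum_zeta_even h0 h1).sub ((hasSum_zeta_even hx0 h2).mul_left 2)
  refine hasSum_of_eq h (fun k => ?_) ?_
  · have : (2 : ℂ) ^ (1 - ((2 * k : ℕ) : ℤ)) = 2 / 2 ^ (2 * k) := by
      rw [zpow_sub₀ two_ne_zero, zpow_one, zpow_natCast]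
    rw [dirEta, this, div_pow]
    ring
  · have hs : Complex.sin (Real.pi * x) ≠ 0 := by
      rw [Ne, Complex.sin_eq_zero_iff]
      rintro ⟨m, hm⟩
      have hpi : (Real.pi : ℂ) ≠ 0 := by exact_mod_cast Real.pi_ne_zero
      refine mem_integerComplement_of_norm_lt_one h0 h1 ⟨m, ?_⟩
      exact mul_left_cancel₀ hpi (by rw [hm]; ring)
    -- The half-angle identity `csc 2z = cot z - cot 2z`, with `z = πx/2`.
    obtain ⟨z, hz⟩ : ∃ z : ℂ, (Real.pi : ℂ) * (x / 2) = z := ⟨_, rfl⟩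
    have hz2 : (Real.pi : ℂ) * x = 2 * z := by rw [← hz]; ring
    rw [hz2] at hs ⊢
    rw [hz, Complex.cot, Complex.cot, Complex.cos_two_mul]
    rw [Complex.sin_two_mul] at hs ⊢
    have hsin : Complex.sin z ≠ 0 := fun h => hs (by simp [h])
    have hcos : Complex.cos z ≠ 0 := fun h => hs (by simp [h])
    field_simp
    ring

/-- Laurent expansion of `π/sin(πs)` around an arbitrary integer `n`:
for `0 < |s−n| < 1`,
`π/sin(πs) = (2·(−1)^n/(s−n))·Σ_{k=0}^∞ η(2k)·(s−n)^{2k}`,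
where `η(2k) = (1−2^{1−2k})ζ(2k)` is the alternating zeta value (with `η(0) = 1/2`);
the series converges absolutely. -/
theorem pi_csc_expansion (n : ℤ) (s : ℂ)
    (h0 : 0 < ‖s - (n : ℂ)‖) (h1 : ‖s - (n : ℂ)‖ < 1) :
    Summable (fun k : ℕ => ‖dirEta (2 * k) * (s - (n : ℂ)) ^ (2 * k)‖) ∧
    (Real.pi : ℂ) / Complex.sin (Real.pi * s) =
      (2 * (-1 : ℂ) ^ n / (s - (n : ℂ))) *
        ∑' k : ℕ, dirEta (2 * k) * (s - (n : ℂ)) ^ (2 * k) := by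
  have hx0 : s - (n : ℂ) ≠ 0 := norm_pos_iff.mp h0
  have h := hasSum_dirEta hx0 h1
  refine ⟨h.summable.norm, ?_⟩
  rw [h.tsum_eq]
  have hsin : Complex.sin (Real.pi * s) =
      (-1 : ℂ) ^ n * Complex.sin (Real.pi * (s - n)) := by
    have := Complex.sin_antiperiodic.add_int_mul_eq n (x := (Real.pi : ℂ) * (s - n))
    rw [show (Real.pi : ℂ) * (s - n) + n * Real.pi = Real.pi * s by ring] at this
    rw [this, Int.cast_negOnePow]
  rw [hsin]
  rcases Int.even_or_odd n with hn | hn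
  · rw [hn.neg_one_zpow]
    field_simp
  · rw [hn.neg_one_zpow]
    field_simp
end

section
/- Let k=(k_1,…,k_r) be an admissible multi-index (i.e. k_r > 1), and let M, n be integers with n+M > 0. Then |ζ_{(0,n+M)}(k_1,…,k_r) − ζ(k_1,…,k_r)| ≤ 2r·(1+ln(n+M))^{r−1}/(n+M), where ζ(k_1,…,k_r) = Σ_{0<n_1<⋯<n_r} 1/(n_1^{k_1}⋯n_r^{k_r}) is the multiple zeta value. -/
/-!
Write `N = n + M` and `r = j + 1`. The truncated sum is the part of the multiple zeta series with
largest index below `N`, so the error is the sum over the tuples with largest index `m ≥ N`. Since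
all exponents are at least `1` and the last is at least `2`, every finite part of it is at most
`∑_{m ≥ N} e_j(m) / m²`, where `e_j(m)` is the `j`-th elementary symmetric polynomial in
`1, 1/2, …, 1/(m-1)` (`sum_tuple_le`).

Put `G_j(m) = (e_0(m) + ⋯ + e_j(m)) / m`. The recursion `e_{j+1}(m+1) = e_{j+1}(m) + e_j(m) / m`
gives the exact telescoping identity `G_j(m) - G_j(m+1) = e_j(m) / (m (m+1))` (`tailG_sub`). With
`1/m² ≤ 2 / (m (m+1))` the error is therefore at most `2 G_j(N)` (`sum_Ico_esym_le`), and
`e_i(N) ≤ (∑_{l<N} 1/l)^i ≤ (1 + ln N)^i ≤ (1 + ln N)^j` for `i ≤ j` yields the claim. The uniform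
bound on finite partial sums also provides the summability of the series.
-/

open scoped BigOperators

/-- truncated multiple zeta value `ζ_{(m₁,m₂)}(k)` (real-valued), over strictly
increasing integer tuples `m₁ < n₁ < ⋯ < n_r < m₂`. -/
noncomputable def rmz (m₁ m₂ : ℤ) (k : List ℕ) : ℝ :=
  ∑' f : {f : Fin k.length → ℤ // StrictMono f ∧ ∀ i, m₁ < f i ∧ f i < m₂},
    ∏ i : Fin k.length, (f.1 i : ℝ) ^ (-(k.get i : ℤ))

/-- multiple zeta value `ζ(k) = Σ_{0<n₁<⋯<n_r} 1/(n₁^{k₁}⋯n_r^{k_r})` (real-valued). -/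
noncomputable def mzv (k : List ℕ) : ℝ :=
  ∑' f : {f : Fin k.length → ℤ // StrictMono f ∧ ∀ i, 0 < f i},
    ∏ i : Fin k.length, (f.1 i : ℝ) ^ (-(k.get i : ℤ))

/-! ### Elementary symmetric polynomials of reciprocals -/

/-- The elementary symmetric polynomial of degree `j` in `1, 1/2, …, 1/(m-1)`, defined by
recursion on the largest index; the index `i = 0` contributes nothing because `0⁻¹ = 0`. -/
noncomputable def esym : ℕ → ℕ → ℝ
  | 0, _ => 1
  | j + 1, m => ∑ i ∈ Finset.range m, esym j i * (i : ℝ)⁻¹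

/-- The function `G_j(m) = (e_0(m) + ⋯ + e_j(m)) / m`, whose differences are
`e_j(m) / (m (m+1))`. -/
noncomputable def tailG (j m : ℕ) : ℝ := (∑ i ∈ Finset.range (j + 1), esym i m) / m

lemma esym_nonneg (j m : ℕ) : 0 ≤ esym j m := by
  induction j generalizing m with
  | zero => simp [esym]
  | succ j ih =>
    rw [esym]
    exact Finset.sum_nonneg fun i _ => mul_nonneg (ih i) (by positivity)

lemma esym_succ_succ (j m : ℕ) :
    esym (j + 1) (m + 1) = esym (j + 1) m + esym j m * (m : ℝ)⁻¹ := by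
  simp [esym, Finset.sum_range_succ]

lemma sum_inv_le (m : ℕ) (hm : 1 ≤ m) :
    ∑ i ∈ Finset.range m, (i : ℝ)⁻¹ ≤ 1 + Real.log m := by
  obtain ⟨n, rfl⟩ : ∃ n, m = n + 1 := ⟨m - 1, by omega⟩
  have h := harmonic_le_one_add_log n
  have h2 : ∑ i ∈ Finset.range (n + 1), (i : ℝ)⁻¹ = (harmonic n : ℝ) := by
    rw [Finset.sum_range_succ', harmonic]
    push_cast
    simp
  rw [h2]
  refine h.trans ?_
  rcases Nat.eq_zero_or_pos n with rfl | hn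
  · simp
  · gcongr
    simp

lemma esym_le (j m : ℕ) (hm : 1 ≤ m) : esym j m ≤ (1 + Real.log m) ^ j := by
  induction j generalizing m with
  | zero => simp [esym]
  | succ j ih =>
    have hlog : 0 ≤ Real.log m := Real.log_natCast_nonneg m
    calc esym (j + 1) m = ∑ i ∈ Finset.range m, esym j i * (i : ℝ)⁻¹ := rfl
      _ ≤ ∑ i ∈ Finset.range m, (1 + Real.log m) ^ j * (i : ℝ)⁻¹ := by
        refine Finset.sum_le_sum fun i hi => ?_
        rcases Nat.eq_zero_or_pos i with rfl | hi0
        · simp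
        · have him : i ≤ m := (Finset.mem_range.1 hi).le
          have h1 : Real.log i ≤ Real.log m := Real.log_le_log (by positivity) (by exact_mod_cast him)
          have h0 : 0 ≤ Real.log i := Real.log_natCast_nonneg i
          gcongr
          exact (ih i hi0).trans (by gcongr)
      _ = (1 + Real.log m) ^ j * ∑ i ∈ Finset.range m, (i : ℝ)⁻¹ := by rw [Finset.mul_sum]
      _ ≤ (1 + Real.log m) ^ j * (1 + Real.log m) := by
        gcongr
        exact sum_inv_le m hm
      _ = _ := (pow_succ _ _).symm

lemma tailG_nonneg (j m : ℕ) : 0 ≤ tailG j m :=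
  div_nonneg (Finset.sum_nonneg fun i _ => esym_nonneg i m) (by positivity)

lemma sum_esym_succ (j m : ℕ) :
    ∑ i ∈ Finset.range (j + 1), esym i (m + 1) =
      ∑ i ∈ Finset.range (j + 1), esym i m +
        (∑ i ∈ Finset.range j, esym i m) * (m : ℝ)⁻¹ := by
  induction j with
  | zero => simp [esym]
  | succ j ih =>
    rw [Finset.sum_range_succ, ih, esym_succ_succ, Finset.sum_range_succ _ (j + 1),
      Finset.sum_range_succ _ j]
    ring

/-- The exact telescoping identity behind the estimate of the tail. -/
lemma tailG_sub (j m : ℕ) (hm : 1 ≤ m) :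
    tailG j m - tailG j (m + 1) = esym j m / (m * (m + 1)) := by
  have h : (m : ℝ) ≠ 0 := by positivity
  have h' : (m : ℝ) + 1 ≠ 0 := by positivity
  rw [tailG, tailG, sum_esym_succ, Finset.sum_range_succ]
  push_cast
  field_simp
  ring

lemma sum_Ico_esym_le (j N K : ℕ) (hN : 1 ≤ N) :
    ∑ m ∈ Finset.Ico N K, esym j m * ((m : ℝ) ^ 2)⁻¹ ≤ 2 * tailG j N := by
  rcases lt_or_ge K N with h | h
  · rw [Finset.Ico_eq_empty (by omega)]
    simpa using tailG_nonneg j N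
  -- Keeping the term `G_j(K)` makes the estimate inductive in `K`.
  suffices ∑ m ∈ Finset.Ico N K, esym j m * ((m : ℝ) ^ 2)⁻¹ ≤ 2 * (tailG j N - tailG j K) by
    linarith [tailG_nonneg j K]
  induction K, h using Nat.le_induction with
  | base => simp
  | succ K hK ih =>
    rw [Finset.sum_Ico_succ_top hK]
    have h1 := tailG_sub j K (hN.trans hK)
    have hK1 : (1 : ℝ) ≤ K := by exact_mod_cast hN.trans hK
    have h2 : esym j K * ((K : ℝ) ^ 2)⁻¹ ≤ 2 * (esym j K / (K * (K + 1))) := by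
      have : ((K : ℝ) ^ 2)⁻¹ ≤ 2 / (K * (K + 1)) := by
        rw [inv_eq_one_div, div_le_div_iff₀ (by positivity) (by positivity)]
        nlinarith
      calc _ ≤ esym j K * (2 / (K * (K + 1))) :=
            mul_le_mul_of_nonneg_left this (esym_nonneg j K)
        _ = _ := by ring
    linarith

lemma tailG_le (j N : ℕ) (hN : 1 ≤ N) :
    tailG j N ≤ (j + 1) * (1 + Real.log N) ^ j / N := by
  have hlog : 0 ≤ Real.log N := Real.log_natCast_nonneg N
  rw [tailG]
  gcongr
  calc ∑ i ∈ Finset.range (j + 1), esym i N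
      ≤ ∑ i ∈ Finset.range (j + 1), (1 + Real.log N) ^ j := by
        refine Finset.sum_le_sum fun i hi => (esym_le i N hN).trans ?_
        exact pow_le_pow_right₀ (by linarith) (by simpa [Nat.lt_succ_iff] using hi)
    _ = _ := by simp

/-! ### Finite sums over increasing tuples -/

/-- Grouping a finite family of increasing tuples by their last entry `m`, given a bound for the
families of shorter tuples with entries below `m`. -/
lemma sum_tuple_step (j : ℕ)
    (hj : ∀ (m : ℕ) (s : Finset (Fin j → ℤ)),
      (∀ f ∈ s, StrictMono f ∧ ∀ i, 0 < f i ∧ f i < m) →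
      ∑ f ∈ s, ∏ i, (f i : ℝ)⁻¹ ≤ esym j m)
    (s : Finset (Fin (j + 1) → ℤ)) (T : Finset ℕ) (w : ℕ → ℝ) (hw : ∀ m, 0 ≤ w m)
    (hs : ∀ f ∈ s, StrictMono f ∧ (∀ i, 0 < f i) ∧ (f (Fin.last j)).toNat ∈ T) :
    ∑ f ∈ s, (∏ i : Fin j, (f i.castSucc : ℝ)⁻¹) * w (f (Fin.last j)).toNat ≤
      ∑ m ∈ T, esym j m * w m := by
  rw [← Finset.sum_fiberwise_of_maps_to (g := fun f => (f (Fin.last j)).toNat)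
    (fun f hf => (hs f hf).2.2)]
  refine Finset.sum_le_sum fun m _ => ?_
  have h1 : ∑ f ∈ s with (f (Fin.last j)).toNat = m,
      (∏ i : Fin j, (f i.castSucc : ℝ)⁻¹) * w (f (Fin.last j)).toNat =
      (∑ f ∈ s with (f (Fin.last j)).toNat = m, ∏ i : Fin j, (f i.castSucc : ℝ)⁻¹) * w m := by
    rw [Finset.sum_mul]
    refine Finset.sum_congr rfl fun f hf => ?_
    rw [(Finset.mem_filter.1 hf).2]
  rw [h1]
  refine mul_le_mul_of_nonneg_right ?_ (hw m)
  have hinj : Set.InjOn (fun (f : Fin (j + 1) → ℤ) (i : Fin j) => f i.castSucc)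
      (↑(s.filter fun f => (f (Fin.last j)).toNat = m) : Set (Fin (j + 1) → ℤ)) := by
    intro f hf g hg hfg
    obtain ⟨hf, hfm⟩ := Finset.mem_filter.1 (Finset.mem_coe.1 hf)
    obtain ⟨hg, hgm⟩ := Finset.mem_filter.1 (Finset.mem_coe.1 hg)
    have h1 := (hs f hf).2.1 (Fin.last j)
    have h2 := (hs g hg).2.1 (Fin.last j)
    funext i
    refine Fin.lastCases ?_ (fun i => congrFun hfg i) i
    omega
  rw [← Finset.sum_image (f := fun f : Fin j → ℤ => ∏ i, (f i : ℝ)⁻¹) hinj]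
  refine hj m _ fun f hf => ?_
  obtain ⟨g, hg, rfl⟩ := Finset.mem_image.1 hf
  obtain ⟨hg, hgm⟩ := Finset.mem_filter.1 hg
  obtain ⟨hmono, hpos, -⟩ := hs g hg
  refine ⟨fun a b hab => hmono (Fin.castSucc_lt_castSucc_iff.2 hab), fun i => ⟨hpos _, ?_⟩⟩
  have := hmono (Fin.castSucc_lt_last i)
  have := hpos (Fin.last j)
  show g i.castSucc < m
  omega

lemma sum_tuple_lt_le (j m : ℕ) (s : Finset (Fin j → ℤ))
    (hs : ∀ f ∈ s, StrictMono f ∧ ∀ i, 0 < f i ∧ f i < m) :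
    ∑ f ∈ s, ∏ i, (f i : ℝ)⁻¹ ≤ esym j m := by
  induction j generalizing m with
  | zero =>
    simp only [Finset.univ_eq_empty, Finset.prod_empty, Finset.sum_const, nsmul_eq_mul, mul_one,
      esym]
    exact_mod_cast Finset.card_le_one_of_subsingleton s
  | succ j ih =>
    refine le_trans (le_of_eq ?_) (sum_tuple_step j ih s (Finset.range m) (fun m => (m : ℝ)⁻¹)
      (fun m => by positivity) fun f hf => ?_)
    · refine Finset.sum_congr rfl fun f hf => ?_
      have h := ((hs f hf).2 (Fin.last j)).1
      have h' : (((f (Fin.last j)).toNat : ℕ) : ℝ) = (f (Fin.last j) : ℝ) := by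
        exact_mod_cast congrArg (Int.cast (R := ℝ)) (Int.toNat_of_nonneg h.le)
      rw [Fin.prod_univ_castSucc, h']
    · have h := (hs f hf).2 (Fin.last j)
      exact ⟨(hs f hf).1, fun i => ((hs f hf).2 i).1, by rw [Finset.mem_range]; omega⟩

/-- A finite family of increasing tuples with last entry in `T`, the last entry carrying the
weight `w`. -/
lemma sum_tuple_le (j : ℕ) (s : Finset (Fin (j + 1) → ℤ)) (T : Finset ℕ) (w : ℕ → ℝ)
    (hw : ∀ m, 0 ≤ w m)
    (hs : ∀ f ∈ s, StrictMono f ∧ (∀ i, 0 < f i) ∧ (f (Fin.last j)).toNat ∈ T) :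
    ∑ f ∈ s, (∏ i : Fin j, (f i.castSucc : ℝ)⁻¹) * w (f (Fin.last j)).toNat ≤
      ∑ m ∈ T, esym j m * w m :=
  sum_tuple_step j (fun m s => sum_tuple_lt_le j m s) s T w hw hs

/-! ### The tail of the series -/

/-- Every finite part of the tail of the multiple zeta series is at most `2 G_j(N)`. -/
lemma sum_tail_le (j : ℕ) (κ : Fin (j + 1) → ℕ) (hκ : ∀ i, 0 < κ i) (hl : 1 < κ (Fin.last j))
    (N : ℕ) (hN : 1 ≤ N) (s : Finset (Fin (j + 1) → ℤ))
    (hs : ∀ f ∈ s, StrictMono f ∧ (∀ i, 0 < f i) ∧ (N : ℤ) ≤ f (Fin.last j)) :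
    ∑ f ∈ s, ∏ i, (f i : ℝ) ^ (-(κ i : ℤ)) ≤ 2 * tailG j N := by
  refine le_trans ?_ ((sum_tuple_le j s
    (Finset.Ico N (s.sup (fun f => (f (Fin.last j)).toNat) + 1))
    (fun m => ((m : ℝ) ^ 2)⁻¹) (fun m => by positivity) fun f hf => ?_).trans
    (sum_Ico_esym_le j N _ hN))
  · refine Finset.sum_le_sum fun f hf => ?_
    obtain ⟨-, hpos, -⟩ := hs f hf
    have h' : (((f (Fin.last j)).toNat : ℕ) : ℝ) = (f (Fin.last j) : ℝ) := by
      exact_mod_cast congrArg (Int.cast (R := ℝ)) (Int.toNat_of_nonneg (hpos (Fin.last j)).le)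
    have h1 : ∀ i, (1 : ℝ) ≤ f i := fun i => by exact_mod_cast hpos i
    rw [Fin.prod_univ_castSucc, h']
    have hnn : ∀ i, (0 : ℝ) ≤ (f i : ℝ) ^ (-(κ i : ℤ)) := fun i =>
      zpow_nonneg (zero_le_one.trans (h1 i)) _
    refine mul_le_mul (Finset.prod_le_prod (fun i _ => hnn _) fun i _ => ?_) ?_ (hnn _)
      (Finset.prod_nonneg fun i _ => inv_nonneg.2 (zero_le_one.trans (h1 _)))
    · rw [← zpow_neg_one]
      exact zpow_le_zpow_right₀ (h1 _) (by have := hκ i.castSucc; omega)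
    · have : ((f (Fin.last j) : ℝ) ^ 2)⁻¹ = (f (Fin.last j) : ℝ) ^ (-2 : ℤ) := by
        rw [zpow_neg]; norm_cast
      rw [this]
      exact zpow_le_zpow_right₀ (h1 _) (by omega)
  · obtain ⟨hm, hpos, hle⟩ := hs f hf
    refine ⟨hm, hpos, ?_⟩
    have := Finset.le_sup (f := fun f : Fin (j + 1) → ℤ => (f (Fin.last j)).toNat) hf
    rw [Finset.mem_Ico]
    omega

/-- The bound for exponents indexed by `Fin (j + 1)`. Both series become sums of indicator functions
over all tuples, so that their difference is the sum over the tuples of the tail. -/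
lemma truncation_error_fin (j : ℕ) (κ : Fin (j + 1) → ℕ) (hκ : ∀ i, 0 < κ i)
    (hl : 1 < κ (Fin.last j)) (N : ℕ) (hN : 1 ≤ N) :
    |(∑' f : {f : Fin (j + 1) → ℤ // StrictMono f ∧ ∀ i, 0 < f i ∧ f i < (N : ℤ)},
        ∏ i, (f.1 i : ℝ) ^ (-(κ i : ℤ))) -
      ∑' f : {f : Fin (j + 1) → ℤ // StrictMono f ∧ ∀ i, 0 < f i},
        ∏ i, (f.1 i : ℝ) ^ (-(κ i : ℤ))| ≤ 2 * tailG j N := by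
  classical
  set F : (Fin (j + 1) → ℤ) → ℝ := fun f => ∏ i, (f i : ℝ) ^ (-(κ i : ℤ)) with hF
  set A : Set (Fin (j + 1) → ℤ) := {f | StrictMono f ∧ ∀ i, 0 < f i} with hA
  set B : Set (Fin (j + 1) → ℤ) := {f | StrictMono f ∧ ∀ i, 0 < f i ∧ f i < (N : ℤ)} with hB
  have hBA : B ⊆ A := fun f hf => ⟨hf.1, fun i => (hf.2 i).1⟩
  have hBfin : B.Finite := by
    refine (Set.Finite.pi' fun _ : Fin (j + 1) => Set.finite_Ioo (0 : ℤ) N).subset ?_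
    exact fun f hf i => hf.2 i
  have hFnn : ∀ f ∈ A, 0 ≤ F f := fun f hf =>
    Finset.prod_nonneg fun i _ => zpow_nonneg (by exact_mod_cast (hf.2 i).le) _
  have hD : ∀ f, 0 ≤ (A \ B).indicator F f :=
    fun f => Set.indicator_nonneg (fun f hf => hFnn f hf.1) f
  have hbound : ∀ u : Finset (Fin (j + 1) → ℤ),
      ∑ f ∈ u, (A \ B).indicator F f ≤ 2 * tailG j N := by
    intro u
    simp only [Set.indicator_apply]
    rw [← Finset.sum_filter]
    refine sum_tail_le j κ hκ hl N hN _ fun f hf => ?_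
    obtain ⟨hfA, hfB⟩ := (Finset.mem_filter.1 hf).2
    refine ⟨hfA.1, hfA.2, ?_⟩
    by_contra! hlt
    exact hfB ⟨hfA.1, fun i => ⟨hfA.2 i, (hfA.1.monotone (Fin.le_last i)).trans_lt hlt⟩⟩
  have hsD : Summable ((A \ B).indicator F) := summable_of_sum_le hD hbound
  have hsB : Summable (B.indicator F) :=
    summable_of_hasFiniteSupport (hBfin.subset Set.support_indicator_subset)
  have hsplit : A.indicator F = fun f => B.indicator F f + (A \ B).indicator F f := by
    rw [← Set.union_sdiff_cancel hBA, Set.indicator_union_of_disjoint Set.disjoint_sdiff_right,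
      Set.union_sdiff_cancel hBA]
  have e1 : ∑' f : B, F f = ∑' f, B.indicator F f := tsum_subtype B F
  have e2 : ∑' f : A, F f = ∑' f, A.indicator F f := tsum_subtype A F
  change |(∑' f : B, F f) - ∑' f : A, F f| ≤ _
  rw [e1, e2, hsplit, hsB.tsum_add hsD, sub_add_cancel_left, abs_neg,
    abs_of_nonneg (tsum_nonneg hD)]
  exact Real.tsum_le_of_sum_le hD hbound

/-- Lemma 4.5: for an admissible multi-index `k` (i.e. `k_r > 1`) and integers `M`, `n`
with `n+M > 0`, `|ζ_{(0,n+M)}(k) − ζ(k)| ≤ 2r·(1+ln(n+M))^{r−1}/(n+M)`. -/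
theorem truncation_error (k : List ℕ) (hk : ∀ x ∈ k, 0 < x) (hr : k ≠ [])
    (ha : 1 < k.getLast hr) (M n : ℤ) (hnM : 0 < n + M) :
    |rmz 0 (n + M) k - mzv k| ≤
      2 * (k.length : ℝ) * (1 + Real.log ((n + M : ℤ) : ℝ)) ^ (k.length - 1) /
        ((n + M : ℤ) : ℝ) := by
  obtain ⟨N, hN⟩ := Int.eq_ofNat_of_zero_le hnM.le
  rw [hN] at hnM ⊢
  have hN1 : 1 ≤ N := by omega
  have hlast : ∀ h : k.length - 1 < k.length, 1 < k.get ⟨k.length - 1, h⟩ := by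
    intro h
    rw [List.getLast_eq_getElem] at ha
    simpa using ha
  have hpos : ∀ i, 0 < k.get i := fun i => hk _ (List.get_mem k i)
  have hlen : 0 < k.length := List.length_pos_of_ne_nil hr
  unfold rmz mzv
  -- The exponents and the length are abstracted so that the length can be replaced by `j + 1`.
  generalize k.get = κ at *
  generalize k.length = r at *
  obtain ⟨j, rfl⟩ : ∃ j, r = j + 1 := ⟨r - 1, by omega⟩
  refine (truncation_error_fin j κ hpos (hlast (by omega)) N hN1).trans ?_
  have h := tailG_le j N hN1
  simp only [Nat.add_sub_cancel, Int.cast_natCast]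
  push_cast
  calc 2 * tailG j N ≤ 2 * ((j + 1) * (1 + Real.log N) ^ j / N) := by linarith
    _ = _ := by ring
end

section
/- Let k=(k_1,…,k_r) be an admissible multi-index (i.e. k_r > 1) and let q ∈ ℤ with q > 1. Then there exists an integer M_0 ≥ 2 such that for all integers M ≥ M_0: | Σ_{n ≤ −M} ζ_{(n,n+M)}(k_1,…,k_r)/n^q | ≤ 2^r·(r+2)·(ln M)^r/M, where the sum runs over all integers n ≤ −M and converges absolutely. -/
/-!
For `n ≤ -M` every index occurring in `ζ_{(n,n+M)}(k)` is a negative integer `a` with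
`|a| ≥ 1`, so each factor `|a|^{-k_i}` is at most `|a|⁻¹`. Dropping the condition that the
tuples increase bounds the sum by an `r`-th power,
`|ζ_{(n,n+M)}(k)| ≤ (∑_{n<a<n+M} |a|⁻¹)^r ≤ (1 + ln M)^r` (`abs_rmz_le`): the inner sum has
`M - 1` terms, the `j`-th largest index having absolute value at least `j`, so it is at most a
harmonic number. Moreover `∑_{N≥M} N^{-q} ≤ ∑_{N≥M} N^{-2} ≤ 2/M` (`sum_inv_sq_le`). For `M ≥ 3`
we have `ln M ≥ 1`, hence `(1 + ln M)^r ≤ 2^r (ln M)^r`, and the whole sum is at most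
`2^r (ln M)^r · 2/M`.
-/

open scoped BigOperators

lemma sum_Ioo_abs_inv_le (m : ℕ) (n : ℤ) (hn : n ≤ -m) :
    ∑ a ∈ Finset.Ioo n (n + m), |(a : ℝ)|⁻¹ ≤ 1 + Real.log m := by
  have hsub : Finset.Ioo n (n + m) ⊆ (Finset.range m).image (fun j : ℕ => n + m - 1 - j) := by
    intro a ha
    rw [Finset.mem_Ioo] at ha
    rw [Finset.mem_image]
    exact ⟨(n + m - 1 - a).toNat, by rw [Finset.mem_range]; omega, by omega⟩
  calc ∑ a ∈ Finset.Ioo n (n + m), |(a : ℝ)|⁻¹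
      ≤ ∑ a ∈ (Finset.range m).image (fun j : ℕ => n + m - 1 - j), |(a : ℝ)|⁻¹ :=
        Finset.sum_le_sum_of_subset_of_nonneg hsub fun _ _ _ => by positivity
    _ = ∑ j ∈ Finset.range m, |((n + m - 1 - j : ℤ) : ℝ)|⁻¹ :=
        Finset.sum_image fun x _ y _ h => by simpa using h
    _ ≤ ∑ j ∈ Finset.range m, ((j + 1 : ℕ) : ℝ)⁻¹ := by
        refine Finset.sum_le_sum fun j _ => inv_anti₀ (by positivity) ?_
        have h : ((j + 1 : ℕ) : ℤ) ≤ |n + m - 1 - j| := le_abs.2 (Or.inr (by push_cast; omega))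
        exact_mod_cast h
    _ = ((harmonic m : ℚ) : ℝ) := by simp [harmonic]
    _ ≤ 1 + Real.log m := harmonic_le_one_add_log m

/-- The truncated multiple zeta value over a window of negative integers of length `m` is bounded
by lowering all exponents to `1` and dropping the ordering of the tuples, which makes the sum factor
into `r` equal one-variable sums, each at most `1 + ln m`. -/
lemma abs_rmz_le (k : List ℕ) (hk : ∀ x ∈ k, 0 < x) (m : ℕ) (n : ℤ) (hn : n ≤ -m) :
    |rmz n (n + m) k| ≤ (1 + Real.log m) ^ k.length := by
  classical
  set S : Set (Fin k.length → ℤ) := {f | StrictMono f ∧ ∀ i, n < f i ∧ f i < n + m} with hS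
  set T : Finset (Fin k.length → ℤ) := Fintype.piFinset fun _ => Finset.Ioo n (n + m) with hT
  set g : (Fin k.length → ℤ) → ℝ := fun f => ∏ i, (f i : ℝ) ^ (-(k.get i : ℤ)) with hg
  have hST : ∀ f ∈ S, f ∈ T := fun f hf =>
    Fintype.mem_piFinset.2 fun i => Finset.mem_Ioo.2 (hf.2 i)
  have h1 : rmz n (n + m) k = ∑ f ∈ T, S.indicator g f := by
    have h2 : rmz n (n + m) k = ∑' f : S, g f := rfl
    rw [h2, tsum_subtype S g]
    exact tsum_eq_sum fun f hf => Set.indicator_of_notMem (fun h => hf (hST f h)) _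
  have h3 : ∀ f ∈ T, |S.indicator g f| ≤ ∏ i, |(f i : ℝ)|⁻¹ := by
    intro f hf
    by_cases hfS : f ∈ S
    · rw [Set.indicator_of_mem hfS, hg, Finset.abs_prod]
      refine Finset.prod_le_prod (fun _ _ => abs_nonneg _) fun i _ => ?_
      have hfi := Finset.mem_Ioo.1 (Fintype.mem_piFinset.1 hf i)
      have hone : (1 : ℝ) ≤ |(f i : ℝ)| := by
        have : (1 : ℤ) ≤ |f i| := le_abs.2 (Or.inr (by omega))
        exact_mod_cast this
      rw [zpow_neg, zpow_natCast, abs_inv, abs_pow]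
      exact inv_anti₀ (by positivity)
        (le_self_pow₀ hone (hk _ (List.get_mem k i)).ne')
    · rw [Set.indicator_of_notMem hfS, abs_zero]
      positivity
  calc |rmz n (n + m) k| ≤ ∑ f ∈ T, |S.indicator g f| := h1 ▸ Finset.abs_sum_le_sum_abs _ _
    _ ≤ ∑ f ∈ T, ∏ i, |(f i : ℝ)|⁻¹ := Finset.sum_le_sum h3
    _ = ∏ _i : Fin k.length, ∑ a ∈ Finset.Ioo n (n + m), |(a : ℝ)|⁻¹ :=
        (Finset.prod_univ_sum (fun _ => Finset.Ioo n (n + m)) fun _ a => |(a : ℝ)|⁻¹).symm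
    _ = (∑ a ∈ Finset.Ioo n (n + m), |(a : ℝ)|⁻¹) ^ k.length := by simp
    _ ≤ (1 + Real.log m) ^ k.length :=
        pow_le_pow_left₀ (Finset.sum_nonneg fun _ _ => by positivity)
          (sum_Ioo_abs_inv_le m n hn) _

lemma sum_inv_sq_le (m : ℕ) (hm : 0 < m) (u : Finset {n : ℤ // n ≤ -(m : ℤ)}) :
    ∑ n ∈ u, ((n.1 : ℝ) ^ 2)⁻¹ ≤ 2 / m := by
  classical
  set φ : {n : ℤ // n ≤ -(m : ℤ)} → ℕ := fun n => (-n.1).toNat with hφ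
  have hinj : Function.Injective φ := by
    rintro ⟨a, ha⟩ ⟨b, hb⟩ h
    simp only [hφ] at h
    exact Subtype.ext (by simp only; omega)
  have hsub : u.image φ ⊆ Finset.Ioo (m - 1) ((u.image φ).sup id + 1) := by
    intro x hx
    have h1 : x ≤ (u.image φ).sup id := Finset.le_sup (f := id) hx
    obtain ⟨⟨a, ha⟩, -, rfl⟩ := Finset.mem_image.1 hx
    rw [Finset.mem_Ioo]
    exact ⟨by simp only [hφ]; omega, by omega⟩
  calc ∑ n ∈ u, ((n.1 : ℝ) ^ 2)⁻¹ = ∑ n ∈ u, ((φ n : ℝ) ^ 2)⁻¹ := by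
        refine Finset.sum_congr rfl fun n _ => ?_
        have h : ((φ n : ℕ) : ℤ) = -n.1 := Int.toNat_of_nonneg (by have := n.2; omega)
        have h' : (φ n : ℝ) = -(n.1 : ℝ) := by exact_mod_cast h
        rw [h', neg_sq]
    _ = ∑ x ∈ u.image φ, ((x : ℝ) ^ 2)⁻¹ := by
        rw [Finset.sum_image hinj.injOn]
    _ ≤ ∑ x ∈ Finset.Ioo (m - 1) ((u.image φ).sup id + 1), ((x : ℝ) ^ 2)⁻¹ :=
        Finset.sum_le_sum_of_subset_of_nonneg hsub fun _ _ _ => by positivity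
    _ ≤ 2 / (((m - 1 : ℕ) : ℝ) + 1) := sum_Ioo_inv_sq_le _ _
    _ = 2 / m := by rw [← Nat.cast_succ, Nat.succ_eq_add_one, Nat.sub_add_cancel hm]

/-- Lemma 4.9: for an admissible multi-index `k` (i.e. `k_r > 1`) and `q > 1`, there is
`M₀ ≥ 2` such that for all `M ≥ M₀` the series `Σ_{n≤−M} ζ_{(n,n+M)}(k)/n^q` converges
absolutely and `|Σ_{n≤−M} ζ_{(n,n+M)}(k)/n^q| ≤ 2^r·(r+2)·(ln M)^r/M`. -/
theorem far_tail_bound (k : List ℕ) (hk : ∀ x ∈ k, 0 < x) (hr : k ≠ [])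
    (ha : 1 < k.getLast hr) (q : ℕ) (hq : 1 < q) :
    ∃ M₀ : ℤ, 2 ≤ M₀ ∧ ∀ M : ℤ, M₀ ≤ M →
      Summable (fun n : {n : ℤ // n ≤ -M} =>
        |rmz n.1 (n.1 + M) k / (n.1 : ℝ) ^ q|) ∧
      |∑' n : {n : ℤ // n ≤ -M}, rmz n.1 (n.1 + M) k / (n.1 : ℝ) ^ q| ≤
        2 ^ k.length * ((k.length : ℝ) + 2) * Real.log (M : ℝ) ^ k.length / (M : ℝ) := by
  -- `M ≥ 3 > e` makes `1 ≤ ln M`.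
  refine ⟨3, by norm_num, fun M hM => ?_⟩
  obtain ⟨m, rfl⟩ := Int.eq_ofNat_of_zero_le (by omega : 0 ≤ M)
  have hm : 3 ≤ m := by exact_mod_cast hM
  have hm3 : (3 : ℝ) ≤ m := by exact_mod_cast hm
  have hlog : 1 ≤ Real.log m := by
    rw [Real.le_log_iff_exp_le (by linarith)]
    linarith [Real.exp_one_lt_d9]
  rw [Int.cast_natCast]
  set C : ℝ := (1 + Real.log m) ^ k.length with hC
  have hC0 : 0 ≤ C := by positivity
  set F : {n : ℤ // n ≤ -(m : ℤ)} → ℝ := fun n => rmz n.1 (n.1 + m) k / (n.1 : ℝ) ^ q with hF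
  have hterm : ∀ n, |F n| ≤ C * ((n.1 : ℝ) ^ 2)⁻¹ := by
    intro n
    have hone : (1 : ℝ) ≤ |(n.1 : ℝ)| := by
      have : (1 : ℤ) ≤ |n.1| := le_abs.2 (Or.inr (by have := n.2; omega))
      exact_mod_cast this
    rw [hF, abs_div, abs_pow, div_eq_mul_inv, ← sq_abs (n.1 : ℝ)]
    refine mul_le_mul (abs_rmz_le k hk m n.1 n.2) ?_ (by positivity) hC0
    exact inv_anti₀ (by positivity) (pow_le_pow_right₀ hone hq)
  have hfin : ∀ u : Finset {n : ℤ // n ≤ -(m : ℤ)}, ∑ n ∈ u, |F n| ≤ C * (2 / m) := fun u =>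
    calc ∑ n ∈ u, |F n| ≤ ∑ n ∈ u, C * ((n.1 : ℝ) ^ 2)⁻¹ := Finset.sum_le_sum fun n _ => hterm n
      _ = C * ∑ n ∈ u, ((n.1 : ℝ) ^ 2)⁻¹ := by rw [Finset.mul_sum]
      _ ≤ C * (2 / m) := mul_le_mul_of_nonneg_left (sum_inv_sq_le m (by omega) u) hC0
  have hsum : Summable fun n => |F n| := summable_of_sum_le (fun _ => abs_nonneg _) hfin
  refine ⟨hsum, ?_⟩
  calc |∑' n, F n| ≤ ∑' n, |F n| := by
        simpa only [Real.norm_eq_abs] using norm_tsum_le_tsum_norm (f := F) hsum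
    _ ≤ C * (2 / m) := hsum.tsum_le_of_sum_le hfin
    _ ≤ (2 * Real.log m) ^ k.length * (((k.length : ℝ) + 2) / m) := by
        rw [hC]
        gcongr
        · linarith
        · linarith [(Nat.cast_nonneg k.length : (0 : ℝ) ≤ k.length)]
    _ = 2 ^ k.length * ((k.length : ℝ) + 2) * Real.log m ^ k.length / m := by
        rw [mul_pow]; ring
end
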